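/- Intermediate Values: Let K be a statistical ALC knowledge base and (C|D) a query such that some model I of K has [D]^I > 0. Let m be the infimum and M the supremum of [C ⊓ D]^I/[D]^I over all models I of K with [D]^I > 0. Then for every real x with m < x < M and every ε > 0, there exists a model I of K with [D]^I > 0 such that |[C ⊓ D]^I/[D]^I − x| < ε. -/

import Mathlib

open scoped Classical

/-- ALC concepts over concept names and role names (both drawn from ℕ,
regarded as disjoint name spaces). -/
inductive Cpt : Type where
  | top : Cpt
  | atom : ℕ → Cpt
  | neg : Cpt → Cpt
  | inter : Cpt → Cpt → Cpt
  | ex : ℕ → Cpt → Cpt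
deriving DecidableEq

/-- A finite interpretation with domain drawn from the type `α`. -/
structure Interp (α : Type) where
  dom : Finset α
  dom_nonempty : dom.Nonempty
  conc : ℕ → Finset α
  conc_sub : ∀ a, conc a ⊆ dom
  role : ℕ → Finset (α × α)
  role_sub : ∀ r, role r ⊆ dom ×ˢ dom

/-- The extension `C^I` of a concept. -/
noncomputable def Interp.ext {α : Type} (I : Interp α) : Cpt → Finset α
  | .top => I.dom
  | .atom a => I.conc a
  | .neg c => I.dom \ I.ext c
  | .inter c d => I.ext c ∩ I.ext d
  | .ex r c => I.dom.filter (fun d => ∃ e ∈ I.ext c, (d, e) ∈ I.role r)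

/-- `[C]^I`, the cardinality of the extension of `C`. -/
noncomputable def cardC {α : Type} (I : Interp α) (c : Cpt) : ℕ := (I.ext c).card

/-- A probabilistic conditional `(C|D)[l,u]`. -/
structure Cond : Type where
  C : Cpt
  D : Cpt
  l : ℚ
  u : ℚ
deriving DecidableEq

/-- `I ⊨ (C|D)[l,u]` iff `[D]^I = 0` or `l ≤ [C ⊓ D]^I/[D]^I ≤ u`. -/
def satCond {α : Type} (I : Interp α) (κ : Cond) : Prop :=
  cardC I κ.D = 0 ∨
    (κ.l ≤ (cardC I (.inter κ.C κ.D) : ℚ) / (cardC I κ.D : ℚ) ∧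
     (cardC I (.inter κ.C κ.D) : ℚ) / (cardC I κ.D : ℚ) ≤ κ.u)

/-- Finite interpretations (with domain drawn from the countable set ℕ). -/
abbrev FInterp := Interp ℕ

/-- The models of a knowledge base (finite set of conditionals). -/
def Models (K : Finset Cond) : Set FInterp := {I | ∀ κ ∈ K, satCond I κ}

/-- l-entailment: every model of `K` satisfies the conditional. -/
def entailsL (K : Finset Cond) (κ : Cond) : Prop := ∀ I ∈ Models K, satCond I κ

/-- The set of proportions `[C ⊓ D]^I/[D]^I` over models `I` of `K` with `[D]^I > 0`. -/
def ratioSet (K : Finset Cond) (C D : Cpt) : Set ℝ :=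
  {x | ∃ I ∈ Models K, 0 < cardC I D ∧
    x = (cardC I (.inter C D) : ℝ) / (cardC I D : ℝ)}

/-!
The extension of a concept in a disjoint union of interpretations is the disjoint union of its
extensions, so all cardinalities `[C]^I` add up. Cleared of denominators, a conditional is a pair of
homogeneous linear inequalities between such cardinalities, hence models of a knowledge base are
closed under disjoint unions. If a rational `q` lies between the proportions realised by two models
`I` and `J`, then suitable numbers of copies of `I` and `J` balance each other so that their
disjoint union realises exactly `q`. Every rational strictly between the infimum and the supremum
is therefore attained, and the rationals are dense in `ℝ`.
-/

section Constructions

variable {ι : Type} [Fintype ι] [Nonempty ι] {α : ι → Type} {β γ : Type}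

/-- The disjoint union of a nonempty finite family of interpretations, living on the sigma type of
the underlying types. It adds up all cardinalities `[C]^I`. -/
noncomputable def Interp.sigma (I : ∀ i, Interp (α i)) : Interp (Σ i, α i) where
  dom := Finset.univ.sigma fun i => (I i).dom
  dom_nonempty := by
    obtain ⟨i⟩ := ‹Nonempty ι›
    obtain ⟨a, ha⟩ := (I i).dom_nonempty
    exact ⟨⟨i, a⟩, Finset.mem_sigma.2 ⟨Finset.mem_univ i, ha⟩⟩
  conc A := Finset.univ.sigma fun i => (I i).conc A
  conc_sub A := Finset.sigma_mono subset_rfl fun i => (I i).conc_sub A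
  role r := (Finset.univ.sigma fun i => (I i).role r).image
    fun p => (⟨p.1, p.2.1⟩, ⟨p.1, p.2.2⟩)
  role_sub r := by
    refine Finset.image_subset_iff.2 fun ⟨i, p⟩ hp => ?_
    simpa using (I i).role_sub r (Finset.mem_sigma.1 hp).2

theorem Interp.dom_sigma (I : ∀ i, Interp (α i)) :
    (sigma I).dom = Finset.univ.sigma fun i => (I i).dom :=
  rfl

theorem Interp.mem_role_sigma (I : ∀ i, Interp (α i)) (r : ℕ) (i : ι) (a : α i) (y : Σ i, α i) :
    (⟨i, a⟩, y) ∈ (sigma I).role r ↔ ∃ b, (a, b) ∈ (I i).role r ∧ ⟨i, b⟩ = y := by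
  simp only [sigma, Finset.mem_image, Finset.mem_sigma, Finset.mem_univ, true_and, Prod.mk.injEq]
  constructor
  · rintro ⟨⟨j, c, b⟩, h, hja, rfl⟩
    cases hja
    exact ⟨b, h, rfl⟩
  · rintro ⟨b, h, rfl⟩
    exact ⟨⟨i, a, b⟩, h, rfl, rfl⟩

theorem Interp.ext_sigma (I : ∀ i, Interp (α i)) (c : Cpt) :
    (sigma I).ext c = Finset.univ.sigma fun i => (I i).ext c := by
  induction c with
  | top => rfl
  | atom A => rfl
  | neg c ih =>
    ext ⟨i, a⟩
    simp [ext, ih, dom_sigma]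
  | inter c d ihc ihd =>
    ext ⟨i, a⟩
    simp [ext, ihc, ihd]
  | ex r c ih =>
    ext ⟨i, a⟩
    simp only [ext, ih, dom_sigma, Finset.mem_filter, Finset.mem_sigma, mem_role_sigma,
      Finset.mem_univ, true_and]
    refine and_congr_right fun _ => ⟨?_, ?_⟩
    · rintro ⟨_, hb, b, hab, rfl⟩
      exact ⟨b, hb, hab⟩
    · rintro ⟨b, hb, hab⟩
      exact ⟨⟨i, b⟩, hb, b, hab, rfl⟩

theorem cardC_sigma (I : ∀ i, Interp (α i)) (c : Cpt) :
    cardC (Interp.sigma I) c = ∑ i, cardC (I i) c := by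
  simp only [cardC, Interp.ext_sigma, Finset.card_sigma]

/-- The isomorphic copy of an interpretation along an embedding of the underlying types; it moves a
disjoint union, which lives on a sigma type, back to domains drawn from `ℕ`. -/
def Interp.map (f : β ↪ γ) (I : Interp β) : Interp γ where
  dom := I.dom.map f
  dom_nonempty := I.dom_nonempty.map
  conc A := (I.conc A).map f
  conc_sub A := Finset.map_subset_map.2 (I.conc_sub A)
  role r := (I.role r).map (f.prodMap f)
  role_sub r := by
    rw [← Finset.prodMap_map_product]
    exact Finset.map_subset_map.2 (I.role_sub r)

theorem Interp.dom_map (f : β ↪ γ) (I : Interp β) : (I.map f).dom = I.dom.map f :=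
  rfl

theorem Interp.role_map (f : β ↪ γ) (I : Interp β) (r : ℕ) :
    (I.map f).role r = (I.role r).map (f.prodMap f) :=
  rfl

theorem Interp.ext_map (f : β ↪ γ) (I : Interp β) (c : Cpt) :
    (I.map f).ext c = (I.ext c).map f := by
  induction c with
  | top => rfl
  | atom A => rfl
  | neg c ih => simp only [ext, ih, dom_map, Finset.map_sdiff]
  | inter c d ihc ihd => simp only [ext, ihc, ihd, Finset.map_inter]
  | ex r c ih => simp [ext, ih, dom_map, role_map, Finset.filter_map]

theorem cardC_map (f : β ↪ γ) (I : Interp β) (c : Cpt) : cardC (I.map f) c = cardC I c := by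
  simp only [cardC, Interp.ext_map, Finset.card_map]

theorem cardC_inter_le_right (I : Interp β) (c d : Cpt) : cardC I (.inter c d) ≤ cardC I d :=
  Finset.card_le_card Finset.inter_subset_right

theorem satCond_iff_mul_le_and_le_mul (I : Interp β) (κ : Cond) :
    satCond I κ ↔ κ.l * cardC I κ.D ≤ cardC I (.inter κ.C κ.D) ∧
      (cardC I (.inter κ.C κ.D) : ℚ) ≤ κ.u * cardC I κ.D := by
  rcases (cardC I κ.D).eq_zero_or_pos with hD | hD
  · have hCD : cardC I (.inter κ.C κ.D) = 0 :=
      Nat.eq_zero_of_le_zero (hD ▸ cardC_inter_le_right I κ.C κ.D)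
    simp [satCond, hD, hCD]
  · have hD' : (0 : ℚ) < cardC I κ.D := Nat.cast_pos.2 hD
    rw [satCond, le_div_iff₀ hD', div_le_iff₀ hD', or_iff_right hD.ne']

theorem satCond_sigma {I : ∀ i, Interp (α i)} {κ : Cond} (h : ∀ i, satCond (I i) κ) :
    satCond (Interp.sigma I) κ := by
  simp only [satCond_iff_mul_le_and_le_mul, cardC_sigma, Nat.cast_sum, Finset.mul_sum] at h ⊢
  exact ⟨Finset.sum_le_sum fun i _ => (h i).1, Finset.sum_le_sum fun i _ => (h i).2⟩

theorem satCond_map (f : β ↪ γ) (I : Interp β) (κ : Cond) :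
    satCond (I.map f) κ ↔ satCond I κ := by
  simp only [satCond, cardC_map]

end Constructions

theorem exists_nat_mul_eq_nat_mul {u v : ℚ} (hu : 0 ≤ u) (hv : 0 < v) :
    ∃ m n : ℕ, 0 < m ∧ m * u = n * v := by
  obtain ⟨n, hn⟩ := Int.eq_ofNat_of_zero_le (Rat.num_nonneg.2 (div_nonneg hu hv.le))
  refine ⟨(u / v).den, n, (u / v).den_pos, ?_⟩
  have huv : (u / v).den * (u / v) = n := by
    rw [Rat.den_mul_eq_num, hn, Int.cast_natCast]
  rw [← huv, mul_assoc, div_mul_cancel₀ u hv.ne']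

section KnowledgeBase

variable {K : Finset Cond} {C D : Cpt}

theorem exists_mem_models_cardC_eq_sum {ι : Type} [Fintype ι] [Nonempty ι] {I : ι → FInterp}
    (hI : ∀ i, I i ∈ Models K) : ∃ L ∈ Models K, ∀ c, cardC L c = ∑ i, cardC (I i) c := by
  obtain ⟨f⟩ := nonempty_embedding_nat (Σ _ : ι, ℕ)
  refine ⟨(Interp.sigma I).map f, fun κ hκ => ?_, fun c => ?_⟩
  · exact (satCond_map f _ κ).2 (satCond_sigma fun i => hI i κ hκ)
  · rw [cardC_map, cardC_sigma]

theorem exists_mem_models_cardC_eq_mul_add_mul {I J : FInterp} (hI : I ∈ Models K)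
    (hJ : J ∈ Models K) {m : ℕ} (hm : 0 < m) (n : ℕ) :
    ∃ L ∈ Models K, ∀ c, cardC L c = m * cardC I c + n * cardC J c := by
  have : Nonempty (Fin m ⊕ Fin n) := ⟨.inl ⟨0, hm⟩⟩
  obtain ⟨L, hL, hcard⟩ := exists_mem_models_cardC_eq_sum
    (I := Sum.elim (fun _ : Fin m => I) fun _ : Fin n => J) (Sum.rec (fun _ => hI) fun _ => hJ)
  exact ⟨L, hL, fun c => by simp [hcard]⟩

theorem ratCast_mem_ratioSet_of_le_of_lt {r s : ℝ} (hr : r ∈ ratioSet K C D)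
    (hs : s ∈ ratioSet K C D) {q : ℚ} (hrq : r ≤ q) (hqs : q < s) :
    (q : ℝ) ∈ ratioSet K C D := by
  obtain ⟨I, hI, hID, rfl⟩ := hr
  obtain ⟨J, hJ, hJD, rfl⟩ := hs
  have hI₀ : 0 ≤ q * cardC I D - cardC I (.inter C D) := by
    rw [div_le_iff₀ (by positivity)] at hrq
    exact sub_nonneg.2 (mod_cast hrq)
  have hJ₀ : 0 < cardC J (.inter C D) - q * cardC J D := by
    rw [lt_div_iff₀ (by positivity)] at hqs
    exact sub_pos.2 (mod_cast hqs)
  -- Weights `m`, `n` for which the deviations of `I` and `J` from the proportion `q` cancel.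
  obtain ⟨m, n, hm, hmn⟩ := exists_nat_mul_eq_nat_mul hI₀ hJ₀
  obtain ⟨L, hL, hcard⟩ := exists_mem_models_cardC_eq_mul_add_mul hI hJ hm n
  have hLD : 0 < cardC L D := hcard D ▸ by positivity
  refine ⟨L, hL, hLD, ?_⟩
  have hL_eq : q * cardC L D = cardC L (.inter C D) := by
    simp only [hcard, Nat.cast_add, Nat.cast_mul]
    linear_combination hmn
  rw [eq_div_iff (by positivity)]
  exact mod_cast hL_eq

theorem ratCast_mem_ratioSet {q : ℚ} (hne : (ratioSet K C D).Nonempty)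
    (hinf : sInf (ratioSet K C D) < q) (hsup : q < sSup (ratioSet K C D)) :
    (q : ℝ) ∈ ratioSet K C D := by
  obtain ⟨r, hr, hrq⟩ := exists_lt_of_csInf_lt hne hinf
  obtain ⟨s, hs, hqs⟩ := exists_lt_of_lt_csSup hne hsup
  exact ratCast_mem_ratioSet_of_le_of_lt hr hs hrq.le hqs

end KnowledgeBase

/-- Intermediate Values. -/
theorem intermediate_values (K : Finset Cond) (C D : Cpt)
    (hex : ∃ I ∈ Models K, 0 < cardC I D)
    (x : ℝ) (hx1 : sInf (ratioSet K C D) < x) (hx2 : x < sSup (ratioSet K C D))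
    (ε : ℝ) (hε : 0 < ε) :
    ∃ I ∈ Models K, 0 < cardC I D ∧
      |(cardC I (.inter C D) : ℝ) / (cardC I D : ℝ) - x| < ε := by
  obtain ⟨I₀, hI₀, hI₀D⟩ := hex
  have hne : (ratioSet K C D).Nonempty := ⟨_, I₀, hI₀, hI₀D, rfl⟩
  obtain ⟨q, hxq, hq⟩ := exists_rat_btwn (lt_min hx2 (lt_add_of_pos_right x hε))
  obtain ⟨hqsup, hqε⟩ := lt_min_iff.1 hq
  obtain ⟨I, hI, hID, hIq⟩ := ratCast_mem_ratioSet hne (hx1.trans hxq) hqsup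
  refine ⟨I, hI, hID, ?_⟩
  rw [← hIq, abs_of_pos (sub_pos.2 hxq)]
  exact sub_left_lt_of_lt_add hqε
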